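/- arXiv:1408.3069 — 2 statements merged into one kernel-verified Lean document; each statement's English description precedes it below -/
import Mathlib

section
/- Let A be an associative interchange algebra over a field F of characteristic 0, with Lie brackets [x,y]_∘ = x∘y − y∘x and [x,y]_• = x•y − y•x. Then for all a, b, c, d, e in A the following alternating sum over all 24 permutations σ of the ordered list (b,c,d,e), with sign ε(σ), vanishes: Σ_σ ε(σ) ( 2·[[a,b^σ]_∘, [a,[c^σ,[d^σ,e^σ]_∘]_•]_∘]_• − 2·[[a,b^σ]_∘, [c^σ,[a,[d^σ,e^σ]_∘]_•]_∘]_• + 2·[[a,b^σ]_∘, [c^σ,[d^σ,[a,e^σ]_∘]_•]_∘]_• − [[b^σ,c^σ]_∘, [a,[d^σ,[a,e^σ]_∘]_•]_∘]_• + [[b^σ,c^σ]_∘, [d^σ,[a,[a,e^σ]_∘]_•]_∘]_• + [[a,b^σ]_∘, [[a,c^σ]_∘,[d^σ,e^σ]_•]_∘]_• + 2·[[a,b^σ]_∘, [[c^σ,d^σ]_∘,[a,e^σ]_•]_∘]_• + [[b^σ,c^σ]_∘, [[a,d^σ]_∘,[a,e^σ]_•]_∘]_• + [[a,[a,b^σ]_∘]_∘,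 [c^σ,[d^σ,e^σ]_•]_∘]_• − [[a,[b^σ,c^σ]_∘]_∘, [d^σ,[a,e^σ]_•]_∘]_• + [[b^σ,[a,c^σ]_∘]_∘, [a,[d^σ,e^σ]_•]_∘]_• ) = 0, where (b^σ,c^σ,d^σ,e^σ) denotes the image of (b,c,d,e) under σ. -/
/-- The normal-form monomials with two letters `a` and four letters to be alternated. -/
def altMon {F A : Type*} [Field F] [AddCommGroup A] [Module F A]
    (mo mb : A →ₗ[F] A →ₗ[F] A) (a : A) : ℕ → A → A → A → A → A
  | 0, b, c, d, e => mo (mb b c) (mb d (mb e (mo a a)))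
  | 1, b, c, d, e => mo (mb b c) (mb d (mb a (mo e a)))
  | 2, b, c, d, e => mo (mb b c) (mb a (mb d (mo e a)))
  | 3, b, c, d, e => mo (mb b c) (mb a (mb d (mo a e)))
  | 4, b, c, d, e => mo (mb b c) (mb a (mb a (mo d e)))
  | 5, b, c, d, e => mo (mb b a) (mb c (mb d (mo e a)))
  | 6, b, c, d, e => mo (mb b a) (mb c (mb d (mo a e)))
  | 7, b, c, d, e => mo (mb b a) (mb c (mb a (mo d e)))
  | 8, b, c, d, e => mo (mb b a) (mb a (mb c (mo d e)))
  | 9, b, c, d, e => mo (mb a b) (mb c (mb d (mo e a)))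
  | 10, b, c, d, e => mo (mb a b) (mb c (mb d (mo a e)))
  | 11, b, c, d, e => mo (mb a b) (mb c (mb a (mo d e)))
  | 12, b, c, d, e => mo (mb a a) (mb b (mb c (mo d e)))
  | 13, b, c, d, e => mo (mb b c) (mb d (mb (mo e a) a))
  | 14, b, c, d, e => mo (mb b c) (mb d (mb (mo a e) a))
  | 15, b, c, d, e => mo (mb b c) (mb a (mb (mo d e) a))
  | 16, b, c, d, e => mo (mb b c) (mb a (mb (mo d a) e))
  | 17, b, c, d, e => mo (mb b c) (mb a (mb (mo a d) e))
  | 18, b, c, d, e => mo (mb b a) (mb c (mb (mo d a) e))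
  | 19, b, c, d, e => mo (mb b a) (mb c (mb (mo a d) e))
  | 20, b, c, d, e => mo (mb b a) (mb a (mb (mo c d) e))
  | 21, b, c, d, e => mo (mb a b) (mb c (mb (mo d e) a))
  | 22, b, c, d, e => mo (mb a b) (mb c (mb (mo d a) e))
  | 23, b, c, d, e => mo (mb a b) (mb c (mb (mo a d) e))
  | 24, b, c, d, e => mo (mb a a) (mb b (mb (mo c d) e))
  | 25, b, c, d, e => mo (mb b (mb c (mo d e))) (mb a a)
  | 26, b, c, d, e => mo (mb b (mb c (mo d a))) (mb e a)
  | 27, b, c, d, e => mo (mb b (mb c (mo d a))) (mb a e)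
  | 28, b, c, d, e => mo (mb b (mb c (mo a d))) (mb e a)
  | 29, b, c, d, e => mo (mb b (mb c (mo a d))) (mb a e)
  | 30, b, c, d, e => mo (mb b (mb c (mo a a))) (mb d e)
  | 31, b, c, d, e => mo (mb b (mb a (mo c d))) (mb e a)
  | 32, b, c, d, e => mo (mb b (mb a (mo c d))) (mb a e)
  | 33, b, c, d, e => mo (mb b (mb a (mo a c))) (mb d e)
  | 34, b, c, d, e => mo (mb a (mb b (mo c d))) (mb e a)
  | 35, b, c, d, e => mo (mb a (mb b (mo c a))) (mb d e)
  | 36, b, c, d, e => mo (mb a (mb b (mo a c))) (mb d e)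
  | 37, b, c, d, e => mo (mb a (mb a (mo b c))) (mb d e)
  | 38, b, c, d, e => mo (mb b (mb (mo c d) e)) (mb a a)
  | 39, b, c, d, e => mo (mb b (mb (mo c d) a)) (mb a e)
  | 40, b, c, d, e => mo (mb b (mb (mo c a) d)) (mb e a)
  | 41, b, c, d, e => mo (mb b (mb (mo c a) d)) (mb a e)
  | 42, b, c, d, e => mo (mb b (mb (mo c a) a)) (mb d e)
  | 43, b, c, d, e => mo (mb b (mb (mo a c) d)) (mb e a)
  | 44, b, c, d, e => mo (mb b (mb (mo a c) d)) (mb a e)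
  | 45, b, c, d, e => mo (mb b (mb (mo a c) a)) (mb d e)
  | 46, b, c, d, e => mo (mb a (mb (mo b c) d)) (mb e a)
  | 47, b, c, d, e => mo (mb a (mb (mo b c) a)) (mb d e)
  | 48, b, c, d, e => mo (mb a (mb (mo b a) c)) (mb d e)
  | 49, b, c, d, e => mo (mb a (mb (mo a b) c)) (mb d e)
  | 50, b, c, d, e => mo (mb b c) (mb (mo d e) (mb a a))
  | 51, b, c, d, e => mo (mb b c) (mb (mo d a) (mb e a))
  | 52, b, c, d, e => mo (mb b c) (mb (mo d a) (mb a e))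
  | 53, b, c, d, e => mo (mb b c) (mb (mo a d) (mb e a))
  | 54, b, c, d, e => mo (mb b c) (mb (mo a a) (mb d e))
  | 55, b, c, d, e => mo (mb b a) (mb (mo c d) (mb a e))
  | 56, b, c, d, e => mo (mb b a) (mb (mo c a) (mb d e))
  | 57, b, c, d, e => mo (mb b a) (mb (mo a c) (mb d e))
  | 58, b, c, d, e => mo (mb a b) (mb (mo c d) (mb e a))
  | 59, b, c, d, e => mo (mb a b) (mb (mo c d) (mb a e))
  | 60, b, c, d, e => mo (mb a b) (mb (mo c a) (mb d e))
  | 61, b, c, d, e => mo (mb a b) (mb (mo a c) (mb d e))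
  | 62, b, c, d, e => mo (mb a a) (mb (mo b c) (mb d e))
  | 63, b, c, d, e => mo (mb (mo b c) (mb d e)) (mb a a)
  | 64, b, c, d, e => mo (mb (mo b c) (mb d a)) (mb a e)
  | 65, b, c, d, e => mo (mb (mo b c) (mb a d)) (mb e a)
  | 66, b, c, d, e => mo (mb (mo b c) (mb a d)) (mb a e)
  | 67, b, c, d, e => mo (mb (mo b c) (mb a a)) (mb d e)
  | 68, b, c, d, e => mo (mb (mo b a) (mb c d)) (mb e a)
  | 69, b, c, d, e => mo (mb (mo b a) (mb c d)) (mb a e)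
  | 70, b, c, d, e => mo (mb (mo b a) (mb c a)) (mb d e)
  | 71, b, c, d, e => mo (mb (mo a b) (mb c d)) (mb e a)
  | 72, b, c, d, e => mo (mb (mo a b) (mb c d)) (mb a e)
  | 73, b, c, d, e => mo (mb (mo a b) (mb c a)) (mb d e)
  | 74, b, c, d, e => mo (mb (mo a b) (mb a c)) (mb d e)
  | 75, b, c, d, e => mo (mb (mo a a) (mb b c)) (mb d e)
  | _, _, _, _, _ => 0

section moves

variable {F : Type*} [Field F]
    {A : Type*} [AddCommGroup A] [Module F A]
    {mo mb : A →ₗ[F] A →ₗ[F] A}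

theorem move_one
    (oassoc : ∀ x y z : A, mo (mo x y) z = mo x (mo y z))
    (bassoc : ∀ x y z : A, mb (mb x y) z = mb x (mb y z))
    (interchange : ∀ w x y z : A, mb (mo w x) (mo y z) = mo (mb w y) (mb x z))
    (a f b c d e : A) :
    mo (mb a f) (mb b (mo d (mb c e))) = mo (mb a f) (mb b (mb c (mo d e))) := by
  rw [← interchange, ← oassoc, interchange, ← bassoc b c e, ← interchange, oassoc, interchange,
    bassoc]

theorem move_two
    (oassoc : ∀ x y z : A, mo (mo x y) z = mo x (mo y z))
    (bassoc : ∀ x y z : A, mb (mb x y) z = mb x (mb y z))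
    (interchange : ∀ w x y z : A, mb (mo w x) (mo y z) = mo (mb w y) (mb x z))
    (a f b c d e : A) :
    mo (mb a (mb c d)) (mb b (mo e f)) = mo (mb a (mb c (mo d e))) (mb b f) := by
  rw [← bassoc a c d, ← interchange, ← oassoc, interchange, bassoc]

theorem move_three
    (oassoc : ∀ x y z : A, mo (mo x y) z = mo x (mo y z))
    (bassoc : ∀ x y z : A, mb (mb x y) z = mb x (mb y z))
    (interchange : ∀ w x y z : A, mb (mo w x) (mo y z) = mo (mb w y) (mb x z))
    (a f b c d e : A) :
    mo (mb a f) (mb (mo d (mb e c)) b) = mo (mb a f) (mb (mo d e) (mb c b)) := by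
  rw [← interchange, ← oassoc, interchange, bassoc e c b, ← interchange, oassoc, interchange]

theorem move_four
    (oassoc : ∀ x y z : A, mo (mo x y) z = mo x (mo y z))
    (interchange : ∀ w x y z : A, mb (mo w x) (mo y z) = mo (mb w y) (mb x z))
    (a f b c d e : A) :
    mo (mb d (mb c a)) (mb (mo e f) b) = mo (mb (mo d e) (mb c a)) (mb f b) := by
  rw [← interchange, ← oassoc, interchange]

end moves

/-- Reindexing an alternating sum by a fixed permutation. -/
theorem alt_reindex {A : Type*} [AddCommGroup A] (v : Fin 4 → A) (g : (Fin 4 → A) → A)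
    (τ : Equiv.Perm (Fin 4)) (n : ℤ) :
    ∑ σ : Equiv.Perm (Fin 4), (Equiv.Perm.sign σ : ℤ) • (n • g (fun i => v (σ (τ i)))) =
      ((Equiv.Perm.sign τ : ℤ) * n) •
        ∑ σ : Equiv.Perm (Fin 4), (Equiv.Perm.sign σ : ℤ) • g (fun i => v (σ i)) := by
  rw [← Equiv.sum_comp (Equiv.mulRight τ)
    (fun σ : Equiv.Perm (Fin 4) => (Equiv.Perm.sign σ : ℤ) • g (fun i => v (σ i))),
    Finset.smul_sum]
  refine Finset.sum_congr rfl fun σ _ => ?_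
  simp only [Equiv.coe_mulRight, Equiv.Perm.sign_mul, Equiv.Perm.mul_apply, Units.val_mul,
    smul_smul]
  congr 1
  rcases Int.units_eq_one_or (Equiv.Perm.sign τ) with h | h <;> rw [h] <;> simp [mul_comm]

set_option maxRecDepth 100000 in
set_option maxHeartbeats 4000000 in
/-- The summand, expanded and normalised. -/
theorem summand_expand {F : Type*} [Field F]
    {A : Type*} [AddCommGroup A] [Module F A]
    (mo mb : A →ₗ[F] A →ₗ[F] A)
    (oassoc : ∀ x y z : A, mo (mo x y) z = mo x (mo y z))
    (bassoc : ∀ x y z : A, mb (mb x y) z = mb x (mb y z))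
    (interchange : ∀ w x y z : A, mb (mo w x) (mo y z) = mo (mb w y) (mb x z))
    (lo lb : A → A → A)
    (hlo : ∀ x y : A, lo x y = mo x y - mo y x)
    (hlb : ∀ x y : A, lb x y = mb x y - mb y x)
    (a b c d e : A) (M : ℕ → ℤ → A → A → A → A → A)
    (hM : ∀ k n x y z w, M k n x y z w = n • altMon mo mb a k x y z w) :
        ( 2 • lb (lo a b) (lo a (lb c (lo d e)))
        - 2 • lb (lo a b) (lo c (lb a (lo d e)))
        + 2 • lb (lo a b) (lo c (lb d (lo a e)))
        - lb (lo b c) (lo a (lb d (lo a e)))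
        + lb (lo b c) (lo d (lb a (lo a e)))
        + lb (lo a b) (lo (lo a c) (lb d e))
        + 2 • lb (lo a b) (lo (lo c d) (lb a e))
        + lb (lo b c) (lo (lo a d) (lb a e))
        + lb (lo a (lo a b)) (lo c (lb d e))
        - lb (lo a (lo b c)) (lo d (lb a e))
        + lb (lo b (lo a c)) (lo a (lb d e)) )
      = M 12 (2) b c d e + M 12 (-2) b c e d + M 12 (1) b d c e + M 12 (-1) b e c d
        + M 12 (1) d e c b + M 12 (-1) e d c b + M 10 (-1) b d e c + M 9 (1) b d e c
        + M 10 (1) b e d c + M 9 (-1) b e d c + M 11 (2) c b e d + M 10 (1) c b d e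
        + M 9 (-2) c b d e + M 10 (1) c b e d + M 9 (-2) c b e d + M 10 (-1) c d e b
        + M 10 (1) c e d b + M 11 (-2) d b c e + M 9 (2) d b e c + M 8 (-2) b c d e
        + M 8 (2) b c e d + M 8 (-1) b d c e + M 8 (1) b e c d + M 7 (1) b c d e
        + M 6 (-1) b c d e + M 5 (1) b c d e + M 5 (-1) b c e d + M 4 (-2) b c e d
        + M 3 (-1) b c d e + M 2 (2) b c d e + M 3 (-1) b c e d + M 2 (2) b c e d
        + M 4 (2) b d c e + M 2 (-2) b d e c + M 1 (-1) b d c e + M 0 (1) b d c e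
        + M 7 (-1) c b d e + M 6 (1) c b d e + M 5 (-1) c b d e + M 5 (1) c b e d
        + M 6 (-1) c d e b + M 5 (2) c d e b + M 6 (1) c e d b + M 5 (-2) c e d b
        + M 0 (-1) c b d e + M 0 (1) c b e d + M 1 (1) c d b e + M 0 (-1) c d b e
        + M 8 (1) d e b c + M 8 (-1) d e c b + M 7 (-1) d e b c + M 7 (1) d e c b
        + M 2 (-1) d b e c + M 1 (1) d b e c + M 2 (1) d c e b + M 1 (-1) d c e b
        + M 24 (-2) b d e c + M 24 (2) b e d c + M 24 (-2) c d e b + M 24 (2) c e d b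
        + M 21 (2) b c d e + M 21 (-2) b c e d + M 23 (1) b d e c + M 22 (-1) b d e c
        + M 23 (-2) c b e d + M 21 (2) c b d e + M 22 (2) c b e d + M 21 (-2) c b e d
        + M 23 (-1) c d e b + M 22 (1) c d e b + M 20 (2) b d e c + M 20 (-2) b e d c
        + M 19 (1) b c e d + M 18 (-1) b c e d + M 17 (2) b c e d + M 15 (-2) b c d e
        + M 16 (-2) b c e d + M 15 (2) b c e d + M 14 (-1) b d c e + M 13 (1) b d c e
        + M 20 (2) c d e b + M 20 (-2) c e d b + M 19 (-1) c b e d + M 18 (1) c b e d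
        + M 19 (-2) c d e b + M 18 (2) c d e b + M 15 (-2) c b d e + M 15 (2) c b e d
        + M 14 (2) c b d e + M 13 (-2) c b d e + M 14 (1) c d b e + M 13 (-1) c d b e
        + M 17 (-1) d b e c + M 16 (1) d b e c + M 17 (1) d c e b + M 16 (-1) d c e b
        + M 37 (2) d e b c + M 37 (-2) e c b d + M 34 (-2) c d e b + M 34 (2) c e d b
        + M 36 (-2) d e b c + M 35 (1) d e b c + M 34 (1) d e c b + M 36 (-1) e b d c
        + M 36 (2) e c b d + M 36 (1) e c d b + M 36 (-2) e d b c + M 34 (1) e b c d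
        + M 34 (-1) e c b d + M 35 (1) e d b c + M 34 (-1) e d c b + M 33 (-1) b e c d
        + M 32 (-2) b d e c + M 32 (2) b e c d + M 31 (1) b e d c + M 25 (2) b c d e
        + M 25 (-2) b c e d + M 29 (2) b d e c + M 28 (1) b d e c + M 27 (-1) b d e c
        + M 26 (-1) b d e c + M 25 (-1) b d e c + M 30 (1) b e c d + M 29 (-2) b e c d
        + M 29 (2) b e d c + M 28 (-1) b e d c + M 27 (-1) b e d c + M 25 (1) b e d c
        + M 33 (1) c e b d + M 31 (-1) c e d b + M 28 (-1) c d e b + M 26 (1) c d e b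
        + M 30 (-1) c e b d + M 28 (1) c e d b + M 30 (1) d e c b + M 28 (-2) d e b c
        + M 29 (-1) d e c b + M 27 (1) d e b c + M 26 (1) d e b c + M 25 (-1) d e b c
        + M 27 (1) d e c b + M 33 (1) e b d c + M 33 (-1) e c d b + M 31 (-1) e b c d
        + M 31 (1) e c b d + M 30 (-1) e d c b + M 28 (2) e d b c + M 29 (1) e d c b
        + M 27 (-1) e d b c + M 26 (-1) e d b c + M 25 (1) e d b c + M 27 (-1) e d c b
        + M 49 (1) e b d c + M 49 (-1) e c d b + M 49 (2) e d b c + M 47 (-2) d e b c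
        + M 47 (-2) d e c b + M 46 (2) d e b c + M 46 (2) d e c b + M 48 (-1) e b d c
        + M 48 (1) e c d b + M 48 (-2) e d b c + M 47 (2) e d b c + M 47 (2) e d c b
        + M 46 (-2) e d b c + M 46 (-2) e d c b + M 45 (1) b e c d + M 44 (-2) b e d c
        + M 43 (-1) b e d c + M 39 (2) b d e c + M 38 (-2) b d e c + M 42 (-1) b e c d
        + M 41 (2) b e d c + M 40 (1) b e d c + M 39 (-2) b e d c + M 38 (2) b e d c
        + M 45 (-1) c e b d + M 43 (1) c e d b + M 39 (2) c d e b + M 38 (-2) c d e b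
        + M 42 (1) c e b d + M 40 (-1) c e d b + M 39 (-2) c e d b + M 38 (2) c e d b
        + M 45 (2) d e c b + M 44 (-1) d e b c + M 43 (-2) d e b c + M 44 (1) d e c b
        + M 42 (-2) d e c b + M 41 (1) d e b c + M 40 (2) d e b c + M 41 (-1) d e c b
        + M 62 (-1) c b d e + M 62 (1) c b e d + M 62 (-1) c d e b + M 62 (1) c e d b
        + M 62 (2) d e c b + M 62 (-2) e d c b + M 61 (-1) b e d c + M 58 (1) b c d e
        + M 58 (-1) b c e d + M 60 (-1) b d e c + M 59 (1) b d e c + M 58 (-2) b d e c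
        + M 60 (1) b e d c + M 58 (2) b e d c + M 61 (1) c b d e + M 61 (-1) c b e d
        + M 61 (1) c e d b + M 60 (-2) c b d e + M 60 (2) c b e d + M 60 (1) c d e b
        + M 59 (-1) c d e b + M 60 (-1) c e d b + M 59 (-1) d b c e + M 58 (1) d b c e
        + M 59 (1) d c b e + M 58 (-1) d c b e + M 57 (1) b c d e + M 57 (-1) b c e d
        + M 56 (-1) b c d e + M 56 (1) b c e d + M 54 (1) b c d e + M 54 (-1) b c e d
        + M 52 (1) b d c e + M 51 (-1) b d c e + M 57 (1) c b d e + M 57 (-1) c b e d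
        + M 57 (1) c d e b + M 57 (1) c e d b + M 56 (-2) c d e b + M 56 (-2) c e d b
        + M 55 (2) c e d b + M 53 (-1) c b d e + M 53 (-1) c b e d + M 51 (2) c b d e
        + M 51 (2) c b e d + M 50 (-2) c b e d + M 52 (-1) c d b e + M 51 (1) c d b e
        + M 56 (2) d c e b + M 55 (-2) d c e b + M 54 (1) d b e c + M 51 (-2) d b c e
        + M 50 (2) d b c e + M 52 (-1) d b e c + M 54 (-1) d c e b + M 52 (1) d c e b
        + M 75 (-1) d e b c + M 75 (1) e b d c + M 75 (-1) e c d b + M 75 (1) e d b c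
        + M 74 (1) b e c d + M 72 (2) b d e c + M 73 (-1) b e c d + M 72 (-2) b e d c
        + M 74 (-1) c e b d + M 71 (1) c d e b + M 73 (1) c e b d + M 73 (2) c e d b
        + M 71 (-2) c e b d + M 71 (-1) c e d b + M 73 (-2) d e c b + M 72 (-1) d e b c
        + M 71 (2) d e b c + M 72 (1) d e c b + M 74 (-1) e b d c + M 74 (1) e c d b
        + M 73 (-2) e d c b + M 72 (1) e d b c + M 71 (2) e d b c + M 72 (-1) e d c b
        + M 69 (-1) b d e c + M 68 (-1) b d e c + M 69 (1) b e d c + M 68 (1) b e d c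
        + M 66 (-1) b c e d + M 63 (1) b c d e + M 64 (1) b c e d + M 63 (-1) b c e d
        + M 68 (-1) c d e b + M 68 (1) c e d b + M 66 (1) c b e d + M 64 (-1) c b e d
        + M 70 (1) d e c b + M 68 (-1) d e b c + M 64 (-1) d c e b + M 63 (1) d c e b
        + M 67 (2) d e c b + M 65 (-2) d e b c + M 64 (-2) d e c b + M 63 (2) d e c b
        + M 70 (1) e d c b + M 69 (-1) e d b c + M 68 (-1) e d b c + M 69 (1) e d c b
        + M 67 (-2) e c d b + M 65 (2) e c b d + M 64 (1) e c d b + M 63 (-1) e c d b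
        + M 66 (1) e d b c + M 66 (-1) e d c b + M 64 (2) e d c b + M 63 (-2) e d c b := by
  simp only [hlo, hlb, map_sub, LinearMap.sub_apply]
  simp only [oassoc, bassoc, interchange,
    move_one oassoc bassoc interchange, move_two oassoc bassoc interchange,
    move_three oassoc bassoc interchange, move_four oassoc interchange]
  simp only [hM, altMon]
  abel

set_option maxRecDepth 100000 in
set_option maxHeartbeats 4000000 in
/-- New degree-6 identity relating the two Lie brackets in an associative interchange
algebra: an alternating sum over all 24 permutations of (b,c,d,e). -/
theorem stmt_13 {F : Type*} [Field F] [CharZero F]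
    {A : Type*} [AddCommGroup A] [Module F A]
    (mo mb : A →ₗ[F] A →ₗ[F] A)
    (oassoc : ∀ x y z : A, mo (mo x y) z = mo x (mo y z))
    (bassoc : ∀ x y z : A, mb (mb x y) z = mb x (mb y z))
    (interchange : ∀ w x y z : A, mb (mo w x) (mo y z) = mo (mb w y) (mb x z))
    (lo lb : A → A → A)
    (hlo : ∀ x y : A, lo x y = mo x y - mo y x)
    (hlb : ∀ x y : A, lb x y = mb x y - mb y x)
    (a b c d e : A) (v : Fin 4 → A) (hv : v = ![b, c, d, e]) :
    ∑ σ : Equiv.Perm (Fin 4),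
      (Equiv.Perm.sign σ : ℤ) •
        ( 2 • lb (lo a (v (σ 0))) (lo a (lb (v (σ 1)) (lo (v (σ 2)) (v (σ 3)))))
        - 2 • lb (lo a (v (σ 0))) (lo (v (σ 1)) (lb a (lo (v (σ 2)) (v (σ 3)))))
        + 2 • lb (lo a (v (σ 0))) (lo (v (σ 1)) (lb (v (σ 2)) (lo a (v (σ 3)))))
        - lb (lo (v (σ 0)) (v (σ 1))) (lo a (lb (v (σ 2)) (lo a (v (σ 3)))))
        + lb (lo (v (σ 0)) (v (σ 1))) (lo (v (σ 2)) (lb a (lo a (v (σ 3)))))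
        + lb (lo a (v (σ 0))) (lo (lo a (v (σ 1))) (lb (v (σ 2)) (v (σ 3))))
        + 2 • lb (lo a (v (σ 0))) (lo (lo (v (σ 1)) (v (σ 2))) (lb a (v (σ 3))))
        + lb (lo (v (σ 0)) (v (σ 1))) (lo (lo a (v (σ 2))) (lb a (v (σ 3))))
        + lb (lo a (lo a (v (σ 0)))) (lo (v (σ 1)) (lb (v (σ 2)) (v (σ 3))))
        - lb (lo a (lo (v (σ 0)) (v (σ 1)))) (lo (v (σ 2)) (lb a (v (σ 3))))
        + lb (lo (v (σ 0)) (lo a (v (σ 1)))) (lo a (lb (v (σ 2)) (v (σ 3)))) )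
      = 0 := by
  clear hv
  obtain ⟨M, hM⟩ : ∃ M : ℕ → ℤ → A → A → A → A → A,
      ∀ k n x y z w, M k n x y z w = n • altMon mo mb a k x y z w := ⟨_, fun _ _ _ _ _ _ => rfl⟩
  obtain ⟨P, hP⟩ : ∃ P : ℕ → A, ∀ k, P k = ∑ σ : Equiv.Perm (Fin 4), (Equiv.Perm.sign σ : ℤ) •
      altMon mo mb a k (v (σ 0)) (v (σ 1)) (v (σ 2)) (v (σ 3)) := ⟨_, fun _ => rfl⟩
  simp only [summand_expand mo mb oassoc bassoc interchange lo lb hlo hlb a _ _ _ _ M hM]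
  -- moving a monomial to its standard order costs the sign of the permutation `τ`
  have re : ∀ (p q r s : Fin 4) (ε : ℤ), (∃ τ : Equiv.Perm (Fin 4),
      τ 0 = p ∧ τ 1 = q ∧ τ 2 = r ∧ τ 3 = s ∧ (Equiv.Perm.sign τ : ℤ) = ε) → ∀ (k : ℕ) (n : ℤ),
      ∑ σ : Equiv.Perm (Fin 4), (Equiv.Perm.sign σ : ℤ) •
        M k n (v (σ p)) (v (σ q)) (v (σ r)) (v (σ s)) = (ε * n) • P k := by
    rintro p q r s ε ⟨τ, rfl, rfl, rfl, rfl, rfl⟩ k n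
    simp only [hM, hP]
    exact alt_reindex v (fun w => altMon mo mb a k (w 0) (w 1) (w 2) (w 3)) τ n
  simp only [smul_add]
  simp (config := { maxSteps := 10000000 }) only [Finset.sum_add_distrib]
  simp (config := { maxSteps := 10000000 }) only [
    re 0 1 2 3 (1) (by decide),
    re 0 1 3 2 (-1) (by decide),
    re 0 2 1 3 (-1) (by decide),
    re 0 2 3 1 (1) (by decide),
    re 0 3 1 2 (1) (by decide),
    re 0 3 2 1 (-1) (by decide),
    re 1 0 2 3 (-1) (by decide),
    re 1 0 3 2 (1) (by decide),
    re 1 2 0 3 (1) (by decide),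
    re 1 2 3 0 (-1) (by decide),
    re 1 3 0 2 (-1) (by decide),
    re 1 3 2 0 (1) (by decide),
    re 2 0 1 3 (1) (by decide),
    re 2 0 3 1 (-1) (by decide),
    re 2 1 0 3 (-1) (by decide),
    re 2 1 3 0 (1) (by decide),
    re 2 3 0 1 (1) (by decide),
    re 2 3 1 0 (-1) (by decide),
    re 3 0 1 2 (-1) (by decide),
    re 3 0 2 1 (1) (by decide),
    re 3 1 0 2 (1) (by decide),
    re 3 1 2 0 (-1) (by decide),
    re 3 2 0 1 (-1) (by decide),
    re 3 2 1 0 (1) (by decide)]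
  clear re hP hM
  abel
end

section
/- Let A be an associative interchange algebra over a field F of characteristic 0, with Lie brackets [x,y]_∘ = x∘y − y∘x and [x,y]_• = x•y − y•x. Then for all a, b, c, d, e, f, g in A the following alternating sum over all 5040 permutations σ of the ordered list (a,b,c,d,e,f,g), with sign ε(σ), vanishes: Σ_σ ε(σ) ( [[a^σ,b^σ]_∘, [[c^σ,d^σ]_•, [e^σ,[f^σ,g^σ]_∘]_•]_∘]_• + [[a^σ,b^σ]_∘, [[c^σ,d^σ]_•, [e^σ,[f^σ,g^σ]_•]_∘]_∘]_• − [[a^σ,b^σ]_•, [[c^σ,d^σ]_∘, [e^σ,[f^σ,g^σ]_∘]_•]_•]_∘ − [[a^σ,b^σ]_•, [[c^σ,d^σ]_∘, [e^σ,[f^σ,g^σ]_•]_∘]_•]_∘ ) = 0, where (a^σ,...,g^σ) denotes the image of (a,...,g) under σ. -/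
/-- The alternating sum of `f` over all reorderings of the seven arguments. -/
def altSum {A : Type*} [AddCommGroup A] (v : Fin 7 → A) (f : (Fin 7 → A) → A) : A :=
  ∑ σ : Equiv.Perm (Fin 7), (Equiv.Perm.sign σ : ℤ) • f (fun i => v (σ i))

theorem altSum_perm {A : Type*} [AddCommGroup A] (v : Fin 7 → A) (f g : (Fin 7 → A) → A)
    (τ : Equiv.Perm (Fin 7)) (s : ℤ) (hs : (Equiv.Perm.sign τ : ℤ) = s)
    (h : ∀ w, f w = g (fun i => w (τ i))) : altSum v f = s • altSum v g := by
  subst hs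
  unfold altSum
  rw [Finset.smul_sum]
  refine Fintype.sum_equiv (Equiv.mulRight τ) _ _ (fun σ => ?_)
  rw [h, smul_smul]
  simp only [Equiv.coe_mulRight, Equiv.Perm.sign_mul, Equiv.Perm.mul_apply, Units.val_mul]
  congr 1
  rcases Int.units_eq_one_or (Equiv.Perm.sign τ) with h1 | h1 <;> simp [h1]

/-- Version of `altSum_perm` for a permutation given by two mutually inverse tables. -/
theorem altSum_table {A : Type*} [AddCommGroup A] {v : Fin 7 → A} {f g : (Fin 7 → A) → A} {s : ℤ}
    {r : A} (hr : r = altSum v g) (p q : Fin 7 → Fin 7) (h : ∀ w, f w = g (fun i => w (p i)))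
    (hqp : ∀ i, q (p i) = i := by decide) (hpq : ∀ i, p (q i) = i := by decide)
    (hs : (Equiv.Perm.sign (⟨p, q, hqp, hpq⟩ : Equiv.Perm (Fin 7)) : ℤ) = s := by decide +kernel) :
    altSum v f = s • r :=
  hr ▸ altSum_perm v f g ⟨p, q, hqp, hpq⟩ s hs h

theorem altSum_add {A : Type*} [AddCommGroup A] (v : Fin 7 → A) (f g : (Fin 7 → A) → A) :
    altSum v (fun w => f w + g w) = altSum v f + altSum v g := by
  simp [altSum, Finset.sum_add_distrib]

theorem altSum_sub {A : Type*} [AddCommGroup A] (v : Fin 7 → A) (f g : (Fin 7 → A) → A) :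
    altSum v (fun w => f w - g w) = altSum v f - altSum v g := by
  simp [altSum, smul_sub]

/-- If `f` is `g` minus `g` with two arguments exchanged, its alternating sum is doubled. -/
theorem altSum_double {A : Type*} [AddCommGroup A] (v : Fin 7 → A) (f g : (Fin 7 → A) → A)
    (i j : Fin 7) (hij : i ≠ j)
    (h : ∀ w, f w = g w - g (fun k => w (Equiv.swap i j k))) :
    altSum v f = (2 : ℤ) • altSum v g := by
  have e : f = fun w => g w - g (fun k => w (Equiv.swap i j k)) := funext h
  rw [e, altSum_sub, altSum_perm v (fun w => g (fun k => w (Equiv.swap i j k))) g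
    (Equiv.swap i j) (-1) (by simp [Equiv.Perm.sign_swap hij]) (fun w => rfl)]
  rw [neg_smul, one_smul, two_smul, sub_neg_eq_add]

/-- New degree-7 identity relating the two Lie brackets in an associative interchange
algebra: an alternating sum over all 5040 permutations of (a,b,c,d,e,f,g). -/
theorem stmt_14 {F : Type*} [Field F] [CharZero F]
    {A : Type*} [AddCommGroup A] [Module F A]
    (mo mb : A →ₗ[F] A →ₗ[F] A)
    (oassoc : ∀ x y z : A, mo (mo x y) z = mo x (mo y z))
    (bassoc : ∀ x y z : A, mb (mb x y) z = mb x (mb y z))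
    (interchange : ∀ w x y z : A, mb (mo w x) (mo y z) = mo (mb w y) (mb x z))
    (lo lb : A → A → A)
    (hlo : ∀ x y : A, lo x y = mo x y - mo y x)
    (hlb : ∀ x y : A, lb x y = mb x y - mb y x)
    (a b c d e f g : A) (v : Fin 7 → A) (hv : v = ![a, b, c, d, e, f, g]) :
    ∑ σ : Equiv.Perm (Fin 7),
      (Equiv.Perm.sign σ : ℤ) •
        ( lb (lo (v (σ 0)) (v (σ 1)))
             (lo (lb (v (σ 2)) (v (σ 3))) (lb (v (σ 4)) (lo (v (σ 5)) (v (σ 6)))))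
        + lb (lo (v (σ 0)) (v (σ 1)))
             (lo (lb (v (σ 2)) (v (σ 3))) (lo (v (σ 4)) (lb (v (σ 5)) (v (σ 6)))))
        - lo (lb (v (σ 0)) (v (σ 1)))
             (lb (lo (v (σ 2)) (v (σ 3))) (lb (v (σ 4)) (lo (v (σ 5)) (v (σ 6)))))
        - lo (lb (v (σ 0)) (v (σ 1)))
             (lb (lo (v (σ 2)) (v (σ 3))) (lo (v (σ 4)) (lb (v (σ 5)) (v (σ 6))))) )
      = 0 := by
  clear hv
  change altSum v (fun w => lb (lo (w 0) (w 1)) (lo (lb (w 2) (w 3)) (lb (w 4) (lo (w 5) (w 6))))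
      + lb (lo (w 0) (w 1)) (lo (lb (w 2) (w 3)) (lo (w 4) (lb (w 5) (w 6))))
      - lo (lb (w 0) (w 1)) (lb (lo (w 2) (w 3)) (lb (w 4) (lo (w 5) (w 6))))
      - lo (lb (w 0) (w 1)) (lb (lo (w 2) (w 3)) (lo (w 4) (lb (w 5) (w 6))))) = 0
  rw [altSum_double v _ (fun w => lb (mo (w 0) (w 1)) (lo (lb (w 2) (w 3)) (lb (w 4) (lo (w 5) (w 6))))
      + lb (mo (w 0) (w 1)) (lo (lb (w 2) (w 3)) (lo (w 4) (lb (w 5) (w 6))))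
      - lo (mb (w 0) (w 1)) (lb (lo (w 2) (w 3)) (lb (w 4) (lo (w 5) (w 6))))
      - lo (mb (w 0) (w 1)) (lb (lo (w 2) (w 3)) (lo (w 4) (lb (w 5) (w 6))))) 0 1 (by decide) (fun w => by
      simp only [Equiv.swap_apply_def, Fin.reduceEq, if_true, if_false]
      simp only [hlo, hlb, map_sub, LinearMap.sub_apply]
      abel)]
  rw [altSum_double v _ (fun w => lb (mo (w 0) (w 1)) (lo (mb (w 2) (w 3)) (lb (w 4) (lo (w 5) (w 6))))
      + lb (mo (w 0) (w 1)) (lo (mb (w 2) (w 3)) (lo (w 4) (lb (w 5) (w 6))))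
      - lo (mb (w 0) (w 1)) (lb (mo (w 2) (w 3)) (lb (w 4) (lo (w 5) (w 6))))
      - lo (mb (w 0) (w 1)) (lb (mo (w 2) (w 3)) (lo (w 4) (lb (w 5) (w 6))))) 2 3 (by decide) (fun w => by
      simp only [Equiv.swap_apply_def, Fin.reduceEq, if_true, if_false]
      simp only [hlo, hlb, map_sub, LinearMap.sub_apply]
      abel)]
  rw [altSum_double v _ (fun w => lb (mo (w 0) (w 1)) (lo (mb (w 2) (w 3)) (lb (w 4) (mo (w 5) (w 6))))
      + lb (mo (w 0) (w 1)) (lo (mb (w 2) (w 3)) (lo (w 4) (mb (w 5) (w 6))))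
      - lo (mb (w 0) (w 1)) (lb (mo (w 2) (w 3)) (lb (w 4) (mo (w 5) (w 6))))
      - lo (mb (w 0) (w 1)) (lb (mo (w 2) (w 3)) (lo (w 4) (mb (w 5) (w 6))))) 5 6 (by decide) (fun w => by
      simp only [Equiv.swap_apply_def, Fin.reduceEq, if_true, if_false]
      simp only [hlo, hlb, map_sub, LinearMap.sub_apply]
      abel)]
  simp only [hlo, hlb, map_sub, LinearMap.sub_apply, altSum_add, altSum_sub]
  obtain ⟨r0, hr0⟩ : ∃ r, r = altSum v (fun w => mb (mo (w 0) (w 1)) (mo (mb (w 2) (w 3)) (mb (w 4) (mo (w 5) (w 6))))) := ⟨_, rfl⟩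
  obtain ⟨r1, hr1⟩ : ∃ r, r = altSum v (fun w => mb (mo (mb (w 0) (w 1)) (mb (w 2) (mo (w 3) (w 4)))) (mo (w 5) (w 6))) := ⟨_, rfl⟩
  obtain ⟨r2, hr2⟩ : ∃ r, r = altSum v (fun w => mb (mo (mb (w 0) (w 1)) (mb (mo (w 2) (w 3)) (w 4))) (mo (w 5) (w 6))) := ⟨_, rfl⟩
  obtain ⟨r3, hr3⟩ : ∃ r, r = altSum v (fun w => mb (mo (w 0) (w 1)) (mo (mo (w 2) (mb (w 3) (w 4))) (mb (w 5) (w 6)))) := ⟨_, rfl⟩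
  obtain ⟨r4, hr4⟩ : ∃ r, r = altSum v (fun w => mb (mo (mo (w 0) (mb (w 1) (w 2))) (mb (w 3) (w 4))) (mo (w 5) (w 6))) := ⟨_, rfl⟩
  obtain ⟨r5, hr5⟩ : ∃ r, r = altSum v (fun w => mb (mo (w 0) (w 1)) (mo (mb (w 2) (w 3)) (mo (mb (w 4) (w 5)) (w 6)))) := ⟨_, rfl⟩
  obtain ⟨r6, hr6⟩ : ∃ r, r = altSum v (fun w => mb (mo (mb (w 0) (w 1)) (mo (mb (w 2) (w 3)) (w 4))) (mo (w 5) (w 6))) := ⟨_, rfl⟩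
  obtain ⟨r7, hr7⟩ : ∃ r, r = altSum v (fun w => mo (mb (w 0) (w 1)) (mb (mo (w 2) (w 3)) (mb (w 4) (mo (w 5) (w 6))))) := ⟨_, rfl⟩
  obtain ⟨r8, hr8⟩ : ∃ r, r = altSum v (fun w => mo (mb (mo (w 0) (w 1)) (mb (w 2) (mo (w 3) (w 4)))) (mb (w 5) (w 6))) := ⟨_, rfl⟩
  obtain ⟨r9, hr9⟩ : ∃ r, r = altSum v (fun w => mo (mb (mo (w 0) (w 1)) (mo (w 2) (mb (w 3) (w 4)))) (mb (w 5) (w 6))) := ⟨_, rfl⟩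
  have h0 : altSum v (fun w => mb (mo (w 0) (w 1)) (mo (mb (w 2) (w 3)) (mb (w 4) (mo (w 5) (w 6))))) = (1:ℤ) • r0 :=
    altSum_table hr0 ![0,1,2,3,4,5,6] ![0,1,2,3,4,5,6] fun w => rfl
  have h1 : altSum v (fun w => mb (mo (mb (w 2) (w 3)) (mb (w 4) (mo (w 5) (w 6)))) (mo (w 0) (w 1))) = (1:ℤ) • r1 :=
    altSum_table hr1 ![2,3,4,5,6,0,1] ![5,6,0,1,2,3,4] fun w => rfl
  have h2 : altSum v (fun w => mb (mo (w 0) (w 1)) (mo (mb (w 4) (mo (w 5) (w 6))) (mb (w 2) (w 3)))) = (-1:ℤ) • r0 :=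
    altSum_table hr0 ![0,1,4,5,2,6,3] ![0,1,4,6,2,3,5] fun w => by
      beta_reduce
      rw [← interchange (w 4) (w 2) (mo (w 5) (w 6)) (w 3), oassoc (w 5) (w 6) (w 3), interchange (w 4) (w 2) (w 5) (mo (w 6) (w 3))]
      rfl
  have h3 : altSum v (fun w => mb (mo (mb (w 4) (mo (w 5) (w 6))) (mb (w 2) (w 3))) (mo (w 0) (w 1))) = (-1:ℤ) • r1 :=
    altSum_table hr1 ![4,5,2,6,3,0,1] ![5,6,2,4,0,1,3] fun w => by
      beta_reduce
      rw [← interchange (w 4) (w 2) (mo (w 5) (w 6)) (w 3), oassoc (w 5) (w 6) (w 3), interchange (w 4) (w 2) (w 5) (mo (w 6) (w 3))]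
      rfl
  have h4 : altSum v (fun w => mb (mo (w 0) (w 1)) (mo (mb (w 2) (w 3)) (mb (mo (w 5) (w 6)) (w 4)))) = (-1:ℤ) • r1 :=
    altSum_table hr1 ![0,2,1,5,6,3,4] ![0,2,1,5,6,3,4] fun w => by
      beta_reduce
      rw [← interchange (w 2) (mo (w 5) (w 6)) (w 3) (w 4), ← bassoc (mo (w 0) (w 1)) (mo (w 2) (mo (w 5) (w 6))) (mo (w 3) (w 4)), interchange (w 0) (w 1) (w 2) (mo (w 5) (w 6))]
      rfl
  have h5 : altSum v (fun w => mb (mo (mb (w 2) (w 3)) (mb (mo (w 5) (w 6)) (w 4))) (mo (w 0) (w 1))) = (1:ℤ) • r2 :=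
    altSum_table hr2 ![2,3,5,6,4,0,1] ![5,6,0,1,4,2,3] fun w => rfl
  have h6 : altSum v (fun w => mb (mo (w 0) (w 1)) (mo (mb (mo (w 5) (w 6)) (w 4)) (mb (w 2) (w 3)))) = (1:ℤ) • r1 :=
    altSum_table hr1 ![0,5,1,6,2,4,3] ![0,2,4,6,5,1,3] fun w => by
      beta_reduce
      rw [← interchange (mo (w 5) (w 6)) (w 2) (w 4) (w 3), ← bassoc (mo (w 0) (w 1)) (mo (mo (w 5) (w 6)) (w 2)) (mo (w 4) (w 3)), oassoc (w 5) (w 6) (w 2), interchange (w 0) (w 1) (w 5) (mo (w 6) (w 2))]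
      rfl
  have h7 : altSum v (fun w => mb (mo (mb (mo (w 5) (w 6)) (w 4)) (mb (w 2) (w 3))) (mo (w 0) (w 1))) = (-1:ℤ) • r2 :=
    altSum_table hr2 ![5,4,6,2,3,0,1] ![5,6,3,4,1,0,2] fun w => by
      beta_reduce
      rw [← interchange (mo (w 5) (w 6)) (w 2) (w 4) (w 3), oassoc (w 5) (w 6) (w 2), interchange (w 5) (mo (w 6) (w 2)) (w 4) (w 3)]
      rfl
  have h8 : altSum v (fun w => mb (mo (w 0) (w 1)) (mo (mb (w 2) (w 3)) (mo (w 4) (mb (w 5) (w 6))))) = (-1:ℤ) • r0 :=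
    altSum_table hr0 ![0,1,2,3,5,4,6] ![0,1,2,3,5,4,6] fun w => by
      beta_reduce
      rw [← oassoc (mb (w 2) (w 3)) (w 4) (mb (w 5) (w 6)), interchange (w 0) (w 1) (mo (mb (w 2) (w 3)) (w 4)) (mb (w 5) (w 6)), ← bassoc (w 1) (w 5) (w 6), ← interchange (w 0) (mb (w 1) (w 5)) (mo (mb (w 2) (w 3)) (w 4)) (w 6), oassoc (mb (w 2) (w 3)) (w 4) (w 6), interchange (w 0) (mb (w 1) (w 5)) (mb (w 2) (w 3)) (mo (w 4) (w 6)), bassoc (w 1) (w 5) (mo (w 4) (w 6)), ← interchange (w 0) (w 1) (mb (w 2) (w 3)) (mb (w 5) (mo (w 4) (w 6)))]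
      rfl
  have h9 : altSum v (fun w => mb (mo (mb (w 2) (w 3)) (mo (w 4) (mb (w 5) (w 6)))) (mo (w 0) (w 1))) = (1:ℤ) • r2 :=
    altSum_table hr2 ![2,3,4,5,6,0,1] ![5,6,0,1,2,3,4] fun w => by
      beta_reduce
      rw [← oassoc (mb (w 2) (w 3)) (w 4) (mb (w 5) (w 6)), interchange (mo (mb (w 2) (w 3)) (w 4)) (mb (w 5) (w 6)) (w 0) (w 1), bassoc (w 5) (w 6) (w 1), ← interchange (mo (mb (w 2) (w 3)) (w 4)) (w 5) (w 0) (mb (w 6) (w 1)), oassoc (mb (w 2) (w 3)) (w 4) (w 5), interchange (mb (w 2) (w 3)) (mo (w 4) (w 5)) (w 0) (mb (w 6) (w 1)), ← bassoc (mo (w 4) (w 5)) (w 6) (w 1), ← interchange (mb (w 2) (w 3)) (mb (mo (w 4) (w 5)) (w 6)) (w 0) (w 1)]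
      rfl
  have h10 : altSum v (fun w => mb (mo (w 0) (w 1)) (mo (mo (w 4) (mb (w 5) (w 6))) (mb (w 2) (w 3)))) = (1:ℤ) • r3 :=
    altSum_table hr3 ![0,1,4,5,6,2,3] ![0,1,5,6,2,3,4] fun w => rfl
  have h11 : altSum v (fun w => mb (mo (mo (w 4) (mb (w 5) (w 6))) (mb (w 2) (w 3))) (mo (w 0) (w 1))) = (1:ℤ) • r4 :=
    altSum_table hr4 ![4,5,6,2,3,0,1] ![5,6,3,4,0,1,2] fun w => rfl
  have h12 : altSum v (fun w => mb (mo (w 0) (w 1)) (mo (mb (w 2) (w 3)) (mo (mb (w 5) (w 6)) (w 4)))) = (1:ℤ) • r5 :=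
    altSum_table hr5 ![0,1,2,3,5,6,4] ![0,1,2,3,6,4,5] fun w => rfl
  have h13 : altSum v (fun w => mb (mo (mb (w 2) (w 3)) (mo (mb (w 5) (w 6)) (w 4))) (mo (w 0) (w 1))) = (1:ℤ) • r6 :=
    altSum_table hr6 ![2,3,5,6,4,0,1] ![5,6,0,1,4,2,3] fun w => rfl
  have h14 : altSum v (fun w => mb (mo (w 0) (w 1)) (mo (mo (mb (w 5) (w 6)) (w 4)) (mb (w 2) (w 3)))) = (-1:ℤ) • r0 :=
    altSum_table hr0 ![0,1,5,6,2,4,3] ![0,1,4,6,5,2,3] fun w => by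
      beta_reduce
      rw [interchange (w 0) (w 1) (mo (mb (w 5) (w 6)) (w 4)) (mb (w 2) (w 3)), ← bassoc (w 1) (w 2) (w 3), ← interchange (w 0) (mb (w 1) (w 2)) (mo (mb (w 5) (w 6)) (w 4)) (w 3), oassoc (mb (w 5) (w 6)) (w 4) (w 3), interchange (w 0) (mb (w 1) (w 2)) (mb (w 5) (w 6)) (mo (w 4) (w 3)), bassoc (w 1) (w 2) (mo (w 4) (w 3)), ← interchange (w 0) (w 1) (mb (w 5) (w 6)) (mb (w 2) (mo (w 4) (w 3)))]
      rfl
  have h15 : altSum v (fun w => mb (mo (mo (mb (w 5) (w 6)) (w 4)) (mb (w 2) (w 3))) (mo (w 0) (w 1))) = (1:ℤ) • r2 :=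
    altSum_table hr2 ![5,6,4,2,3,0,1] ![5,6,3,4,2,0,1] fun w => by
      beta_reduce
      rw [interchange (mo (mb (w 5) (w 6)) (w 4)) (mb (w 2) (w 3)) (w 0) (w 1), bassoc (w 2) (w 3) (w 1), ← interchange (mo (mb (w 5) (w 6)) (w 4)) (w 2) (w 0) (mb (w 3) (w 1)), oassoc (mb (w 5) (w 6)) (w 4) (w 2), interchange (mb (w 5) (w 6)) (mo (w 4) (w 2)) (w 0) (mb (w 3) (w 1)), ← bassoc (mo (w 4) (w 2)) (w 3) (w 1), ← interchange (mb (w 5) (w 6)) (mb (mo (w 4) (w 2)) (w 3)) (w 0) (w 1)]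
      rfl
  have h16 : altSum v (fun w => mo (mb (w 0) (w 1)) (mb (mo (w 2) (w 3)) (mb (w 4) (mo (w 5) (w 6))))) = (1:ℤ) • r7 :=
    altSum_table hr7 ![0,1,2,3,4,5,6] ![0,1,2,3,4,5,6] fun w => rfl
  have h17 : altSum v (fun w => mo (mb (mo (w 2) (w 3)) (mb (w 4) (mo (w 5) (w 6)))) (mb (w 0) (w 1))) = (1:ℤ) • r8 :=
    altSum_table hr8 ![2,3,4,5,6,0,1] ![5,6,0,1,2,3,4] fun w => rfl
  have h18 : altSum v (fun w => mo (mb (w 0) (w 1)) (mb (mb (w 4) (mo (w 5) (w 6))) (mo (w 2) (w 3)))) = (1:ℤ) • r3 :=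
    altSum_table hr3 ![0,4,1,5,2,6,3] ![0,2,4,6,1,3,5] fun w => by
      beta_reduce
      rw [bassoc (w 4) (mo (w 5) (w 6)) (mo (w 2) (w 3)), ← interchange (w 0) (w 4) (w 1) (mb (mo (w 5) (w 6)) (mo (w 2) (w 3))), interchange (w 5) (w 6) (w 2) (w 3), ← oassoc (w 1) (mb (w 5) (w 2)) (mb (w 6) (w 3))]
      rfl
  have h19 : altSum v (fun w => mo (mb (mb (w 4) (mo (w 5) (w 6))) (mo (w 2) (w 3))) (mb (w 0) (w 1))) = (-1:ℤ) • r5 :=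
    altSum_table hr5 ![4,0,5,2,6,3,1] ![1,6,3,5,0,2,4] fun w => by
      beta_reduce
      rw [bassoc (w 4) (mo (w 5) (w 6)) (mo (w 2) (w 3)), ← interchange (w 4) (w 0) (mb (mo (w 5) (w 6)) (mo (w 2) (w 3))) (w 1), interchange (w 5) (w 6) (w 2) (w 3), oassoc (mb (w 5) (w 2)) (mb (w 6) (w 3)) (w 1)]
      rfl
  have h20 : altSum v (fun w => mo (mb (w 0) (w 1)) (mb (mo (w 2) (w 3)) (mb (mo (w 5) (w 6)) (w 4)))) = (-1:ℤ) • r4 :=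
    altSum_table hr4 ![0,2,5,3,6,1,4] ![0,5,1,3,6,2,4] fun w => by
      beta_reduce
      rw [← bassoc (mo (w 2) (w 3)) (mo (w 5) (w 6)) (w 4), ← interchange (w 0) (mb (mo (w 2) (w 3)) (mo (w 5) (w 6))) (w 1) (w 4), interchange (w 2) (w 3) (w 5) (w 6), ← oassoc (w 0) (mb (w 2) (w 5)) (mb (w 3) (w 6))]
      rfl
  have h21 : altSum v (fun w => mo (mb (mo (w 2) (w 3)) (mb (mo (w 5) (w 6)) (w 4))) (mb (w 0) (w 1))) = (1:ℤ) • r6 :=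
    altSum_table hr6 ![2,5,3,6,0,4,1] ![4,6,0,2,5,1,3] fun w => by
      beta_reduce
      rw [← bassoc (mo (w 2) (w 3)) (mo (w 5) (w 6)) (w 4), ← interchange (mb (mo (w 2) (w 3)) (mo (w 5) (w 6))) (w 0) (w 4) (w 1), interchange (w 2) (w 3) (w 5) (w 6), oassoc (mb (w 2) (w 5)) (mb (w 3) (w 6)) (w 0)]
      rfl
  have h22 : altSum v (fun w => mo (mb (w 0) (w 1)) (mb (mb (mo (w 5) (w 6)) (w 4)) (mo (w 2) (w 3)))) = (1:ℤ) • r7 :=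
    altSum_table hr7 ![0,1,5,6,4,2,3] ![0,1,5,6,4,2,3] fun w => by
      beta_reduce
      rw [bassoc (mo (w 5) (w 6)) (w 4) (mo (w 2) (w 3))]
      rfl
  have h23 : altSum v (fun w => mo (mb (mb (mo (w 5) (w 6)) (w 4)) (mo (w 2) (w 3))) (mb (w 0) (w 1))) = (1:ℤ) • r8 :=
    altSum_table hr8 ![5,6,4,2,3,0,1] ![5,6,3,4,2,0,1] fun w => by
      beta_reduce
      rw [bassoc (mo (w 5) (w 6)) (w 4) (mo (w 2) (w 3))]
      rfl
  have h24 : altSum v (fun w => mo (mb (w 0) (w 1)) (mb (mo (w 2) (w 3)) (mo (w 4) (mb (w 5) (w 6))))) = (-1:ℤ) • r7 :=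
    altSum_table hr7 ![0,1,2,3,5,4,6] ![0,1,2,3,5,4,6] fun w => by
      beta_reduce
      rw [← interchange (w 0) (mo (w 2) (w 3)) (w 1) (mo (w 4) (mb (w 5) (w 6))), ← oassoc (w 1) (w 4) (mb (w 5) (w 6)), interchange (w 0) (mo (w 2) (w 3)) (mo (w 1) (w 4)) (mb (w 5) (w 6)), ← bassoc (mo (w 2) (w 3)) (w 5) (w 6), ← interchange (w 0) (mb (mo (w 2) (w 3)) (w 5)) (mo (w 1) (w 4)) (w 6), oassoc (w 1) (w 4) (w 6), interchange (w 0) (mb (mo (w 2) (w 3)) (w 5)) (w 1) (mo (w 4) (w 6)), bassoc (mo (w 2) (w 3)) (w 5) (mo (w 4) (w 6))]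
      rfl
  have h25 : altSum v (fun w => mo (mb (mo (w 2) (w 3)) (mo (w 4) (mb (w 5) (w 6)))) (mb (w 0) (w 1))) = (1:ℤ) • r9 :=
    altSum_table hr9 ![2,3,4,5,6,0,1] ![5,6,0,1,2,3,4] fun w => rfl
  have h26 : altSum v (fun w => mo (mb (w 0) (w 1)) (mb (mo (w 4) (mb (w 5) (w 6))) (mo (w 2) (w 3)))) = (1:ℤ) • r7 :=
    altSum_table hr7 ![0,1,4,5,6,2,3] ![0,1,5,6,2,3,4] fun w => by
      beta_reduce
      rw [← interchange (w 0) (mo (w 4) (mb (w 5) (w 6))) (w 1) (mo (w 2) (w 3)), ← oassoc (w 0) (w 4) (mb (w 5) (w 6)), interchange (mo (w 0) (w 4)) (mb (w 5) (w 6)) (w 1) (mo (w 2) (w 3)), bassoc (w 5) (w 6) (mo (w 2) (w 3)), ← interchange (mo (w 0) (w 4)) (w 5) (w 1) (mb (w 6) (mo (w 2) (w 3))), oassoc (w 0) (w 4) (w 5), interchange (w 0) (mo (w 4) (w 5)) (w 1) (mb (w 6) (mo (w 2) (w 3)))]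
      rfl
  have h27 : altSum v (fun w => mo (mb (mo (w 4) (mb (w 5) (w 6))) (mo (w 2) (w 3))) (mb (w 0) (w 1))) = (-1:ℤ) • r9 :=
    altSum_table hr9 ![4,5,2,6,3,0,1] ![5,6,2,4,0,1,3] fun w => by
      beta_reduce
      rw [interchange (w 4) (mb (w 5) (w 6)) (w 2) (w 3), bassoc (w 5) (w 6) (w 3), ← interchange (w 4) (w 5) (w 2) (mb (w 6) (w 3))]
      rfl
  have h28 : altSum v (fun w => mo (mb (w 0) (w 1)) (mb (mo (w 2) (w 3)) (mo (mb (w 5) (w 6)) (w 4)))) = (-1:ℤ) • r9 :=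
    altSum_table hr9 ![0,2,1,5,6,3,4] ![0,2,1,5,6,3,4] fun w => by
      beta_reduce
      rw [interchange (w 2) (w 3) (mb (w 5) (w 6)) (w 4), ← oassoc (mb (w 0) (w 1)) (mb (w 2) (mb (w 5) (w 6))) (mb (w 3) (w 4)), ← interchange (w 0) (w 2) (w 1) (mb (w 5) (w 6))]
      rfl
  have h29 : altSum v (fun w => mo (mb (mo (w 2) (w 3)) (mo (mb (w 5) (w 6)) (w 4))) (mb (w 0) (w 1))) = (1:ℤ) • r8 :=
    altSum_table hr8 ![2,3,5,6,4,0,1] ![5,6,0,1,4,2,3] fun w => by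
      beta_reduce
      rw [← interchange (mo (w 2) (w 3)) (w 0) (mo (mb (w 5) (w 6)) (w 4)) (w 1), oassoc (mb (w 5) (w 6)) (w 4) (w 1), interchange (mo (w 2) (w 3)) (w 0) (mb (w 5) (w 6)) (mo (w 4) (w 1)), ← bassoc (mo (w 2) (w 3)) (w 5) (w 6), ← interchange (mb (mo (w 2) (w 3)) (w 5)) (w 0) (w 6) (mo (w 4) (w 1)), ← oassoc (w 6) (w 4) (w 1), interchange (mb (mo (w 2) (w 3)) (w 5)) (w 0) (mo (w 6) (w 4)) (w 1), bassoc (mo (w 2) (w 3)) (w 5) (mo (w 6) (w 4))]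
      rfl
  have h30 : altSum v (fun w => mo (mb (w 0) (w 1)) (mb (mo (mb (w 5) (w 6)) (w 4)) (mo (w 2) (w 3)))) = (1:ℤ) • r9 :=
    altSum_table hr9 ![0,5,1,6,2,4,3] ![0,2,4,6,5,1,3] fun w => by
      beta_reduce
      rw [interchange (mb (w 5) (w 6)) (w 4) (w 2) (w 3), ← oassoc (mb (w 0) (w 1)) (mb (mb (w 5) (w 6)) (w 2)) (mb (w 4) (w 3)), bassoc (w 5) (w 6) (w 2), ← interchange (w 0) (w 5) (w 1) (mb (w 6) (w 2))]
      rfl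
  have h31 : altSum v (fun w => mo (mb (mo (mb (w 5) (w 6)) (w 4)) (mo (w 2) (w 3))) (mb (w 0) (w 1))) = (-1:ℤ) • r8 :=
    altSum_table hr8 ![5,4,6,2,3,0,1] ![5,6,3,4,1,0,2] fun w => by
      beta_reduce
      rw [← interchange (mo (mb (w 5) (w 6)) (w 4)) (w 0) (mo (w 2) (w 3)) (w 1), oassoc (mb (w 5) (w 6)) (w 4) (w 0), interchange (mb (w 5) (w 6)) (mo (w 4) (w 0)) (mo (w 2) (w 3)) (w 1), bassoc (w 5) (w 6) (mo (w 2) (w 3)), ← interchange (w 5) (mo (w 4) (w 0)) (mb (w 6) (mo (w 2) (w 3))) (w 1), ← oassoc (w 5) (w 4) (w 0), interchange (mo (w 5) (w 4)) (w 0) (mb (w 6) (mo (w 2) (w 3))) (w 1)]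
      rfl
  rw [h0, h1, h2, h3, h4, h5, h6, h7, h8, h9, h10, h11, h12, h13, h14, h15, h16, h17, h18, h19, h20, h21, h22, h23, h24, h25, h26, h27, h28, h29, h30, h31]
  simp only [one_smul, neg_smul]
  abel
end
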